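/- Let n ≥ 2 and N = 2^{n-1} − 1, and let Q_n^N be the collection of kernels of the form Q(·|z) = λ_z δ_{bin_n(2l(z))} + (1−λ_z) δ_{bin_n(2l(z)+1)}, z ∈ {0,1}^N, that lie in the closure of F_{N,n} and realize arbitrary prescribed ratios (∑_{z: l(z)=l} λ_z)/(∑_{z: l(z)=l}(1−λ_z)) = r_l > 0 for all l. Then { p^⊤Q : p ∈ E_N, Q ∈ Q_n^N } = Δ_n^+, the set of strictly positive probability distributions on {0,1}^n. -/

import Mathlib

open Finset

/-- The logistic sigmoid function `σ(a) = 1/(1+exp(-a))`. -/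
noncomputable def sigmoid (a : ℝ) : ℝ := 1 / (1 + Real.exp (-a))

/-- Real value of a bit. -/
def bval (b : Bool) : ℝ := if b then 1 else 0

/-- The set `F_{k,m}` of Markov kernels representable by a feedforward layer of `m`
sigmoid stochastic units with `k` binary inputs. -/
noncomputable def Fset (k m : ℕ) : Set ((Fin k → Bool) → (Fin m → Bool) → ℝ) :=
  {P | ∃ (V : Fin m → Fin k → ℝ) (c : Fin m → ℝ), ∀ y z,
    P y z = ∏ j, (if z j then sigmoid ((∑ i, V j i * bval (y i)) + c j)
                  else 1 - sigmoid ((∑ i, V j i * bval (y i)) + c j))}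

/-- `Δ_{k,n}`: all Markov kernels from `{0,1}^k` to distributions on `{0,1}^n`. -/
def markovKernels (k n : ℕ) : Set ((Fin k → Bool) → (Fin n → Bool) → ℝ) :=
  {P | (∀ y x, 0 ≤ P y x) ∧ ∀ y, ∑ x, P y x = 1}

/-- Composition of Markov kernels: `(R ∘ Q)(x|y) = ∑_z Q(z|y) R(x|z)`. -/
noncomputable def kcomp {k m n : ℕ} (R : (Fin m → Bool) → (Fin n → Bool) → ℝ)
    (Q : (Fin k → Bool) → (Fin m → Bool) → ℝ) : (Fin k → Bool) → (Fin n → Bool) → ℝ :=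
  fun y x => ∑ z, Q y z * R z x

/-- `Δ_n`: probability distributions on `{0,1}^n`. -/
def simplex (n : ℕ) : Set ((Fin n → Bool) → ℝ) :=
  {p | (∀ x, 0 ≤ p x) ∧ ∑ x, p x = 1}

/-- `Δ_n^+`: strictly positive probability distributions on `{0,1}^n`. -/
def simplexPos (n : ℕ) : Set ((Fin n → Bool) → ℝ) :=
  {p | (∀ x, 0 < p x) ∧ ∑ x, p x = 1}

/-- Mixture `p^⊤ R` of the rows of a kernel `R` with weights `p`. -/
noncomputable def mix {m n : ℕ} (p : (Fin m → Bool) → ℝ)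
    (R : (Fin m → Bool) → (Fin n → Bool) → ℝ) : (Fin n → Bool) → ℝ :=
  fun x => ∑ z, p z * R z x

/-- `E_m`: strictly positive product distributions on `{0,1}^m`, where the `j`-th bit
is `0` with probability `q j ∈ (0,1)`. -/
def Eset (m : ℕ) : Set ((Fin m → Bool) → ℝ) :=
  {p | ∃ q : Fin m → ℝ, (∀ j, q j ∈ Set.Ioo (0:ℝ) 1) ∧
    ∀ z, p z = ∏ j, (if z j then 1 - q j else q j)}

/-- Integer value of a binary vector (bit `i` has weight `2^i`). -/
def intval {k : ℕ} (y : Fin k → Bool) : ℕ := ∑ i, if y i then 2 ^ (i : ℕ) else 0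

/-- `l(z)`: position (1-based) of the largest nonzero entry of `z`, and `0` if `z = 0`. -/
def lidx {N : ℕ} (z : Fin N → Bool) : ℕ :=
  (Finset.univ.filter (fun j => z j = true)).sup (fun j => (j : ℕ) + 1)

/-- `bin_n(l)`: the `n`-bit binary representation of `l`. -/
def binVec (n l : ℕ) : Fin n → Bool := fun i => Nat.testBit l (i : ℕ)

/-- Point measure at `x ∈ {0,1}^n`. -/
noncomputable def deltaAt {n : ℕ} (x : Fin n → Bool) : (Fin n → Bool) → ℝ :=
  fun x' => if x' = x then 1 else 0

/-- The collection `Q_n^N` of kernels `Q(·|z) = λ_z δ_{bin_n(2l(z))} + (1-λ_z) δ_{bin_n(2l(z)+1)}`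
lying in the closure of `F_{N,n}` and realizing some positive ratio
`(∑_{z:l(z)=l} λ_z)/(∑_{z:l(z)=l}(1-λ_z)) = r_l > 0` for every `l ∈ {0,…,N}`. -/
noncomputable def Qcoll (n : ℕ) :
    Set ((Fin (2 ^ (n - 1) - 1) → Bool) → (Fin n → Bool) → ℝ) :=
  {Q | ∃ lam : (Fin (2 ^ (n - 1) - 1) → Bool) → ℝ,
    (∀ z, lam z ∈ Set.Icc (0:ℝ) 1) ∧
    (∀ z x, Q z x = lam z * deltaAt (binVec n (2 * lidx z)) x
        + (1 - lam z) * deltaAt (binVec n (2 * lidx z + 1)) x) ∧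
    Q ∈ closure (Fset (2 ^ (n - 1) - 1) n) ∧
    (∀ l ≤ 2 ^ (n - 1) - 1, ∃ r : ℝ, 0 < r ∧
      (∑ z ∈ Finset.univ.filter (fun z => lidx z = l), lam z)
        = r * (∑ z ∈ Finset.univ.filter (fun z => lidx z = l), (1 - lam z)))}

/-!
Let `z` be drawn from a product distribution on `{0,1}^N`. The probability that the largest
nonzero position `l(z)` equals `l` can be prescribed freely, one coordinate at a time: the last
bit decides the mass of `l = N`, and rescales the masses of all smaller `l` by a common factor.

The output `bin_n(2 l(z) + b)` consists of the lowest bit `b` and the `n - 1` bits of `l(z)`.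
Every function of `l(z)` is a decision list in the bits of `z`, hence a linear threshold function,
hence a limit of sigmoid units. The remaining unit produces `b`. The weight of the `j`-th input
bit does not influence the unit on vectors with `l(z) < j`, so the weights can be chosen
successively by the intermediate value theorem such that `b` has any prescribed conditional
probability given `l(z)`. As every `x ∈ {0,1}^n` is `bin_n(2l + b)` for a unique pair `(l, b)`,
these two choices together produce any strictly positive distribution.
-/

open Filter Topology

section Sigmoid

lemma sigmoid_eq_realSigmoid : sigmoid = Real.sigmoid := by
  ext a
  rw [sigmoid, Real.sigmoid_def, one_div]

lemma tendsto_sigmoid_mul_atTop {a : ℝ} (ha : a ≠ 0) :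
    Tendsto (fun s ↦ sigmoid (s * a)) atTop (𝓝 (if 0 < a then 1 else 0)) := by
  rw [sigmoid_eq_realSigmoid]
  split_ifs with hpos
  · exact Real.tendsto_sigmoid_atTop.comp (tendsto_id.atTop_mul_const hpos)
  · exact Real.tendsto_sigmoid_atBot.comp
      (tendsto_id.atTop_mul_const_of_neg (ha.lt_of_le (not_lt.1 hpos)))

lemma exists_sum_mul_sigmoid_add_eq {ι : Type*} [Fintype ι] (p a : ι → ℝ) {y : ℝ}
    (hy : y ∈ Set.Ioo 0 (∑ i, p i)) : ∃ t, ∑ i, p i * sigmoid (a i + t) = y := by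
  rw [sigmoid_eq_realSigmoid]
  have hcont : Continuous fun t ↦ ∑ i, p i * Real.sigmoid (a i + t) :=
    continuous_finsetSum _ fun i _ ↦
      continuous_const.mul (continuous_sigmoid.comp (continuous_const_add _))
  have htop : Tendsto (fun t ↦ ∑ i, p i * Real.sigmoid (a i + t)) atTop (𝓝 (∑ i, p i * 1)) :=
    tendsto_finsetSum _ fun i _ ↦ (Real.tendsto_sigmoid_atTop.comp
      (tendsto_atTop_add_const_left _ _ tendsto_id)).const_mul _
  have hbot : Tendsto (fun t ↦ ∑ i, p i * Real.sigmoid (a i + t)) atBot (𝓝 (∑ i, p i * 0)) :=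
    tendsto_finsetSum _ fun i _ ↦ (Real.tendsto_sigmoid_atBot.comp
      (tendsto_atBot_add_const_left _ _ tendsto_id)).const_mul _
  simp only [mul_one, mul_zero, sum_const_zero] at htop hbot
  obtain ⟨t₁, ht₁⟩ := (htop.eventually_const_lt hy.2).exists
  obtain ⟨t₀, ht₀⟩ := (hbot.eventually_lt_const hy.1).exists
  exact mem_range_of_exists_le_of_exists_ge hcont ⟨t₀, ht₀.le⟩ ⟨t₁, ht₁.le⟩

end Sigmoid

section LargestIndex

variable {N : ℕ}

lemma lidx_le (z : Fin N → Bool) : lidx z ≤ N :=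
  Finset.sup_le fun j _ ↦ j.isLt

lemma lidx_snoc_true (z : Fin N → Bool) : lidx (Fin.snoc (α := fun _ ↦ Bool) z true) = N + 1 :=
  (lidx_le _).antisymm <| Finset.le_sup (f := fun j : Fin (N + 1) ↦ (j : ℕ) + 1)
    (b := Fin.last N) (by simp)

lemma lidx_snoc_false (z : Fin N → Bool) :
    lidx (Fin.snoc (α := fun _ ↦ Bool) z false) = lidx z := by
  refine eq_of_forall_ge_iff fun c ↦ ?_
  simp [lidx, Fin.forall_fin_succ']

lemma exists_lidx_eq {l : ℕ} (hl : l ≤ N) : ∃ z : Fin N → Bool, lidx z = l := by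
  refine ⟨fun j ↦ decide ((j : ℕ) < l), eq_of_forall_ge_iff fun c ↦ ?_⟩
  simp only [lidx, Finset.sup_le_iff, mem_filter, mem_univ, true_and, decide_eq_true_eq]
  refine ⟨fun h ↦ ?_, fun h j hj ↦ by omega⟩
  rcases l with _ | l
  · exact c.zero_le
  · exact h ⟨l, hl⟩ l.lt_succ_self

lemma filter_lidx_eq_nonempty {l : ℕ} (hl : l ≤ N) :
    ({z : Fin N → Bool | lidx z = l} : Finset (Fin N → Bool)).Nonempty :=
  (exists_lidx_eq hl).imp fun z hz ↦ by simpa using hz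

lemma sum_univ_snoc {M : Type*} [AddCommMonoid M] (f : (Fin (N + 1) → Bool) → M) :
    ∑ z, f z =
      ∑ z : Fin N → Bool, f (Fin.snoc z true) + ∑ z : Fin N → Bool, f (Fin.snoc z false) := by
  rw [← (Fin.snocEquiv fun _ : Fin (N + 1) ↦ Bool).sum_comp, Fintype.sum_prod_type,
    Fintype.sum_bool]
  rfl

lemma sum_lidx_eq_succ {M : Type*} [AddCommMonoid M] (f : (Fin (N + 1) → Bool) → M) :
    ∑ z with lidx z = N + 1, f z = ∑ z : Fin N → Bool, f (Fin.snoc z true) := by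
  have hne (z : Fin N → Bool) : lidx z ≠ N + 1 := (Nat.lt_succ_of_le (lidx_le z)).ne
  simp [Finset.sum_filter, sum_univ_snoc, lidx_snoc_true, lidx_snoc_false, hne]

lemma sum_lidx_eq_of_le {M : Type*} [AddCommMonoid M] (f : (Fin (N + 1) → Bool) → M) {l : ℕ}
    (hl : l ≤ N) :
    ∑ z with lidx z = l, f z = ∑ z : Fin N → Bool with lidx z = l, f (Fin.snoc z false) := by
  have hne : N + 1 ≠ l := by omega
  simp [Finset.sum_filter, sum_univ_snoc, lidx_snoc_true, lidx_snoc_false, hne]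

end LargestIndex

/-- The Bernoulli mass function on a bit, parametrized by the probability `θ` of the bit `0`,
as in the product distributions `E_N` and in the mixing weights `λ_z`. -/
def bernoulliMass (θ : ℝ) (b : Bool) : ℝ := if b then 1 - θ else θ

lemma sum_bernoulliMass (θ : ℝ) : ∑ b, bernoulliMass θ b = 1 := by
  simp [bernoulliMass]

lemma bernoulliMass_nonneg {θ : ℝ} (hθ : θ ∈ Set.Icc (0 : ℝ) 1) (b : Bool) :
    0 ≤ bernoulliMass θ b := by
  cases b
  · exact hθ.1
  · exact sub_nonneg.2 hθ.2

lemma bernoulliMass_pos {θ : ℝ} (hθ : θ ∈ Set.Ioo (0 : ℝ) 1) (b : Bool) :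
    0 < bernoulliMass θ b := by
  cases b
  · exact hθ.1
  · exact sub_pos.2 hθ.2

section ProductDistribution

/-- The product distribution on `{0,1}^N` whose `j`-th bit is `0` with probability `q j`. -/
def productMass {N : ℕ} (q : Fin N → ℝ) (z : Fin N → Bool) : ℝ :=
  ∏ j, bernoulliMass (q j) (z j)

variable {N : ℕ} (q : Fin N → ℝ)

lemma mem_Eset_iff {p : (Fin N → Bool) → ℝ} :
    p ∈ Eset N ↔ ∃ q : Fin N → ℝ, (∀ j, q j ∈ Set.Ioo (0 : ℝ) 1) ∧ p = productMass q := by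
  simp only [funext_iff]
  rfl

lemma sum_productMass : ∑ z, productMass q z = 1 := by
  simp only [productMass, ← Fintype.piFinset_univ, ← Finset.prod_univ_sum, sum_bernoulliMass,
    prod_const_one]

lemma productMass_snoc (t : ℝ) (z : Fin N → Bool) (b : Bool) :
    productMass (Fin.snoc (α := fun _ ↦ ℝ) q t) (Fin.snoc (α := fun _ ↦ Bool) z b) =
      productMass q z * bernoulliMass t b := by
  simp [productMass, Fin.prod_univ_castSucc]

lemma productMass_pos {q : Fin N → ℝ} (hq : ∀ j, q j ∈ Set.Ioo (0 : ℝ) 1) (z : Fin N → Bool) :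
    0 < productMass q z :=
  Finset.prod_pos fun j _ ↦ bernoulliMass_pos (hq j) (z j)

lemma exists_sum_productMass_lidx_eq (N : ℕ) {m : ℕ → ℝ} (hm : ∀ l ≤ N, 0 < m l) :
    ∃ q : Fin N → ℝ, (∀ j, q j ∈ Set.Ioo (0 : ℝ) 1) ∧
      ∀ l ≤ N, (∑ k ∈ range (N + 1), m k) * ∑ z with lidx z = l, productMass q z = m l := by
  induction N with
  | zero =>
    refine ⟨Fin.elim0, fun j ↦ j.elim0, fun l hl ↦ ?_⟩
    obtain rfl := Nat.le_zero.1 hl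
    have hlidx (z : Fin 0 → Bool) : lidx z = 0 := Nat.le_zero.1 (lidx_le z)
    simp [hlidx, productMass]
  | succ N ih =>
    obtain ⟨q, hq, hsum⟩ := ih fun l hl ↦ hm l (by omega)
    rw [sum_range_succ _ (N + 1)]
    set S := ∑ k ∈ range (N + 1), m k
    have hS : 0 < S := sum_pos (fun k hk ↦ hm k (mem_range_le hk)) (by simp)
    have hlast : 0 < m (N + 1) := hm _ le_rfl
    have hT : 0 < S + m (N + 1) := add_pos hS hlast
    refine ⟨Fin.snoc q (S / (S + m (N + 1))), ?_, fun l hl ↦ ?_⟩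
    · simp only [Fin.forall_fin_succ', Fin.snoc_castSucc, Fin.snoc_last]
      exact ⟨hq, div_pos hS hT, (div_lt_one hT).2 (lt_add_of_pos_right S hlast)⟩
    · rcases hl.lt_or_eq with hl | rfl
      · simp only [sum_lidx_eq_of_le _ (Nat.le_of_lt_succ hl), productMass_snoc, ← sum_mul,
          ← hsum l (Nat.le_of_lt_succ hl), bernoulliMass, Bool.false_eq_true, if_false]
        field_simp
      · simp only [sum_lidx_eq_succ, productMass_snoc, ← sum_mul, sum_productMass, bernoulliMass,
          if_true]
        field_simp
        ring

end ProductDistribution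

section NetInput

/-- The input `w^⊤ z + c` of a unit with weights `w` and bias `c` on the bit vector `z`. -/
noncomputable def netInput {N : ℕ} (w : Fin N → ℝ) (c : ℝ) (z : Fin N → Bool) : ℝ :=
  (∑ i, w i * bval (z i)) + c

variable {N : ℕ}

lemma netInput_snoc (w : Fin N → ℝ) (t c : ℝ) (z : Fin N → Bool) (b : Bool) :
    netInput (Fin.snoc (α := fun _ ↦ ℝ) w t) c (Fin.snoc (α := fun _ ↦ Bool) z b) =
      netInput w c z + t * bval b := by
  simp [netInput, Fin.sum_univ_castSucc, add_right_comm]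

lemma netInput_smul (s : ℝ) (w : Fin N → ℝ) (c : ℝ) (z : Fin N → Bool) :
    netInput (s • w) (s * c) z = s * netInput w c z := by
  simp [netInput, mul_add, mul_sum, mul_assoc]

lemma exists_sum_mul_sigmoid_netInput_lidx_eq (p : (Fin N → Bool) → ℝ) (y : ℕ → ℝ)
    (hy : ∀ l ≤ N, y l ∈ Set.Ioo 0 (∑ z with lidx z = l, p z)) :
    ∃ w c, ∀ l ≤ N, ∑ z with lidx z = l, p z * sigmoid (netInput w c z) = y l := by
  induction N with
  | zero =>
    have hlidx (z : Fin 0 → Bool) : lidx z = 0 := Nat.le_zero.1 (lidx_le z)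
    obtain ⟨c, hc⟩ := exists_sum_mul_sigmoid_add_eq p 0 (by simpa [hlidx] using hy 0 le_rfl)
    refine ⟨0, c, fun l hl ↦ ?_⟩
    obtain rfl := Nat.le_zero.1 hl
    simpa [hlidx, netInput] using hc
  | succ N ih =>
    obtain ⟨w, c, hwc⟩ := ih (fun z ↦ p (Fin.snoc z false)) fun l hl ↦ by
      simpa only [sum_lidx_eq_of_le p hl] using hy l (by omega)
    obtain ⟨t, ht⟩ := exists_sum_mul_sigmoid_add_eq (fun z : Fin N → Bool ↦ p (Fin.snoc z true))
      (netInput w c) (by simpa only [sum_lidx_eq_succ] using hy (N + 1) le_rfl)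
    refine ⟨Fin.snoc w t, c, fun l hl ↦ ?_⟩
    rcases hl.lt_or_eq with hl | rfl
    · simpa [sum_lidx_eq_of_le _ (Nat.le_of_lt_succ hl), netInput_snoc, bval]
        using hwc l (Nat.le_of_lt_succ hl)
    · simpa [sum_lidx_eq_succ, netInput_snoc, bval] using ht

lemma exists_netInput_pos_iff (f : ℕ → Bool) (N : ℕ) : ∃ (w : Fin N → ℝ) (c : ℝ), ∀ z,
    netInput w c z ≠ 0 ∧ (0 < netInput w c z ↔ f (lidx z) = true) := by
  induction N with
  | zero =>
    refine ⟨0, if f 0 then 1 else -1, fun z ↦ ?_⟩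
    have hlidx : lidx z = 0 := Nat.le_zero.1 (lidx_le z)
    cases hf : f 0 <;> simp [netInput, hlidx, hf]
  | succ N ih =>
    obtain ⟨w, c, hwc⟩ := ih
    obtain ⟨M, hM⟩ := (Set.finite_range fun z ↦ |netInput w c z|).bddAbove
    have hbound (z) : |netInput w c z| < M + 1 := (hM ⟨z, rfl⟩).trans_lt (lt_add_one M)
    -- The new weight outvotes all earlier ones, so the last bit decides whenever it is set.
    refine ⟨Fin.snoc w (if f (N + 1) then M + 1 else -(M + 1)), c, fun z ↦ ?_⟩
    induction z using Fin.snocCases with | _ z b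
    obtain ⟨hlower, hupper⟩ := abs_lt.1 (hbound z)
    cases b
    · simpa [netInput_snoc, lidx_snoc_false, bval] using hwc z
    · cases hf : f (N + 1) <;> simp only [netInput_snoc, lidx_snoc_true, bval, hf] <;> grind

end NetInput

section Closure

/-- The kernel from `{0,1}^N` to a single bit computed by one sigmoid unit. -/
noncomputable def unitKernel {N : ℕ} (w : Fin N → ℝ) (c : ℝ) (z : Fin N → Bool) : Bool → ℝ :=
  bernoulliMass (1 - sigmoid (netInput w c z))

/-- The set of kernels `unitKernel w c`, i.e. of layers that consist of one unit. -/
def unitKernels (N : ℕ) : Set ((Fin N → Bool) → Bool → ℝ) :=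
  {g | ∃ w c, g = unitKernel w c}

variable {N : ℕ}

lemma prod_mem_Fset {m : ℕ} {g : Fin m → (Fin N → Bool) → Bool → ℝ}
    (hg : ∀ j, g j ∈ unitKernels N) : (fun z x ↦ ∏ j, g j z (x j)) ∈ Fset N m := by
  choose w c hwc using hg
  refine ⟨w, c, fun z x ↦ prod_congr rfl fun j _ ↦ ?_⟩
  simp [hwc, unitKernel, bernoulliMass, netInput]

lemma prod_mem_closure_Fset {m : ℕ} {g : Fin m → (Fin N → Bool) → Bool → ℝ}
    (hg : ∀ j, g j ∈ closure (unitKernels N)) :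
    (fun z x ↦ ∏ j, g j z (x j)) ∈ closure (Fset N m) := by
  have hg' : g ∈ closure (Set.univ.pi fun _ ↦ unitKernels N) := by
    rw [closure_pi_set]
    exact fun j _ ↦ hg j
  have hcont : Continuous fun (g : Fin m → (Fin N → Bool) → Bool → ℝ) z (x : Fin m → Bool) ↦
      ∏ j, g j z (x j) := by fun_prop
  exact map_mem_closure hcont hg' fun g hg ↦ prod_mem_Fset fun j ↦ hg j trivial

lemma ite_eq_lidx_mem_closure_unitKernels (f : ℕ → Bool) :
    (fun (z : Fin N → Bool) b ↦ if b = f (lidx z) then 1 else 0) ∈ closure (unitKernels N) := by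
  obtain ⟨w, c, hwc⟩ := exists_netInput_pos_iff f N
  refine mem_closure_of_tendsto (f := fun s : ℝ ↦ unitKernel (s • w) (s * c)) (b := atTop) ?_
    (.of_forall fun s ↦ ⟨_, _, rfl⟩)
  refine tendsto_pi_nhds.2 fun z ↦ tendsto_pi_nhds.2 fun b ↦ ?_
  have hlim := tendsto_sigmoid_mul_atTop (hwc z).1
  simp only [(hwc z).2, ← netInput_smul] at hlim
  cases b
  · cases hf : f (lidx z) <;> simpa [unitKernel, bernoulliMass, hf] using hlim.const_sub 1
  · simpa [unitKernel, bernoulliMass] using hlim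

end Closure

section Binary

lemma binVec_injOn (n : ℕ) : Set.InjOn (binVec n) (Set.Iio (2 ^ n)) := by
  intro a ha b hb hab
  refine Nat.eq_of_testBit_eq fun i ↦ ?_
  by_cases hi : i < n
  · exact congrFun hab ⟨i, hi⟩
  · have hpow : 2 ^ n ≤ 2 ^ i := Nat.pow_le_pow_right two_pos (not_lt.1 hi)
    rw [Nat.testBit_lt_two_pow (ha.trans_le hpow), Nat.testBit_lt_two_pow (hb.trans_le hpow)]

lemma binVec_bijective (n : ℕ) : Function.Bijective fun a : Fin (2 ^ n) ↦ binVec n a :=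
  (Fintype.bijective_iff_injective_and_card _).2
    ⟨fun a b hab ↦ Fin.ext (binVec_injOn n a.isLt b.isLt hab), by simp⟩

lemma exists_lt_binVec_eq {n : ℕ} (x : Fin n → Bool) : ∃ l < 2 ^ n, binVec n l = x := by
  obtain ⟨l, hl⟩ := (binVec_bijective n).surjective x
  exact ⟨l, l.isLt, hl⟩

lemma sum_binVec {M : Type*} [AddCommMonoid M] (n : ℕ) (f : (Fin n → Bool) → M) :
    ∑ l ∈ range (2 ^ n), f (binVec n l) = ∑ x, f x := by
  rw [sum_range, ← (binVec_bijective n).sum_comp]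

lemma sum_cons_binVec {M : Type*} [AddCommMonoid M] (k : ℕ) (f : (Fin (k + 1) → Bool) → M) :
    ∑ l ∈ range (2 ^ k), ∑ b, f (Fin.cons b (binVec k l)) = ∑ x, f x := by
  rw [sum_binVec k fun y ↦ ∑ b, f (Fin.cons b y), sum_comm, ← Fintype.sum_prod_type',
    ← (Fin.consEquiv fun _ : Fin (k + 1) ↦ Bool).sum_comp]
  rfl

lemma binVec_bit (k l : ℕ) (b : Bool) :
    binVec (k + 1) (Nat.bit b l) = Fin.cons b (binVec k l) := by
  ext j
  induction j using Fin.cases <;> simp [binVec, Nat.testBit_bit_succ]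

lemma deltaAt_cons {k : ℕ} (a b : Bool) (x y : Fin k → Bool) :
    deltaAt (Fin.cons (α := fun _ ↦ Bool) a x) (Fin.cons b y) =
      (if b = a then 1 else 0) * deltaAt x y := by
  simp [deltaAt, Fin.cons_inj, ← ite_and, and_comm]

lemma deltaAt_eq_prod {n : ℕ} (x y : Fin n → Bool) :
    deltaAt x y = ∏ j, if y j = x j then 1 else 0 := by
  simp [deltaAt, Fintype.prod_ite_zero, funext_iff]

end Binary

section MixtureKernel

/-- The kernel `Q(·|z) = λ_z δ_{bin_n(2l(z))} + (1 - λ_z) δ_{bin_n(2l(z)+1)}`. -/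
noncomputable def mixtureKernel {N : ℕ} (n : ℕ) (lam : (Fin N → Bool) → ℝ) (z : Fin N → Bool)
    (x : Fin n → Bool) : ℝ :=
  lam z * deltaAt (binVec n (2 * lidx z)) x + (1 - lam z) * deltaAt (binVec n (2 * lidx z + 1)) x

variable {N k : ℕ} (lam : (Fin N → Bool) → ℝ)

lemma mixtureKernel_cons (z : Fin N → Bool) (b : Bool) (y : Fin k → Bool) :
    mixtureKernel (k + 1) lam z (Fin.cons b y) =
      bernoulliMass (lam z) b * deltaAt (binVec k (lidx z)) y := by
  have heven : binVec (k + 1) (2 * lidx z) = Fin.cons false (binVec k (lidx z)) :=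
    binVec_bit k (lidx z) false
  have hodd : binVec (k + 1) (2 * lidx z + 1) = Fin.cons true (binVec k (lidx z)) :=
    binVec_bit k (lidx z) true
  cases b <;> simp [mixtureKernel, heven, hodd, deltaAt_cons, bernoulliMass]

lemma sum_mixtureKernel (n : ℕ) (z : Fin N → Bool) : ∑ x, mixtureKernel n lam z x = 1 := by
  simp [mixtureKernel, sum_add_distrib, deltaAt]

lemma mix_mixtureKernel_cons_binVec (hN : N < 2 ^ k) (p : (Fin N → Bool) → ℝ) (b : Bool) {l : ℕ}
    (hl : l < 2 ^ k) :
    mix p (mixtureKernel (k + 1) lam) (Fin.cons b (binVec k l)) =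
      ∑ z with lidx z = l, p z * bernoulliMass (lam z) b := by
  rw [sum_filter]
  refine sum_congr rfl fun z _ ↦ ?_
  have hiff : binVec k l = binVec k (lidx z) ↔ lidx z = l :=
    ((binVec_injOn k).eq_iff hl ((lidx_le z).trans_lt hN)).trans eq_comm
  simp [mixtureKernel_cons, deltaAt, hiff]

lemma mixtureKernel_mem_closure_Fset (k : ℕ) (w : Fin N → ℝ) (c : ℝ) :
    mixtureKernel (k + 1) (fun z ↦ 1 - sigmoid (netInput w c z)) ∈ closure (Fset N (k + 1)) := by
  let g : Fin (k + 1) → (Fin N → Bool) → Bool → ℝ :=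
    Fin.cons (unitKernel w c) fun j z b ↦ if b = (lidx z).testBit j then 1 else 0
  have hg : ∀ j, g j ∈ closure (unitKernels N) :=
    Fin.cases (subset_closure ⟨w, c, rfl⟩) fun j ↦
      ite_eq_lidx_mem_closure_unitKernels fun l ↦ l.testBit j
  convert prod_mem_closure_Fset hg using 1
  ext z x
  induction x using Fin.consCases with | _ b y
  simp only [mixtureKernel_cons, deltaAt_eq_prod, Fin.prod_univ_succ, Fin.cons_zero, Fin.cons_succ]
  rfl

end MixtureKernel

section Image

variable {N k : ℕ}

lemma sum_bernoulliMass_pos_of_ratio {ι : Type*} {s : Finset ι} (hs : s.Nonempty) {θ : ι → ℝ}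
    {r : ℝ} (hr : 0 < r) (hratio : ∑ i ∈ s, θ i = r * ∑ i ∈ s, (1 - θ i)) (b : Bool) :
    0 < ∑ i ∈ s, bernoulliMass (θ i) b := by
  have htotal : (1 + r) * ∑ i ∈ s, (1 - θ i) = s.card := by
    rw [one_add_mul, ← hratio, ← sum_add_distrib]
    simp
  have hpos : 0 < ∑ i ∈ s, (1 - θ i) :=
    pos_of_mul_pos_right (htotal ▸ Nat.cast_pos.2 hs.card_pos) (by positivity)
  cases b
  · exact (mul_pos hr hpos).trans_eq hratio.symm
  · exact hpos

lemma exists_pos_ratio {ι : Type*} {s : Finset ι} (hs : s.Nonempty) {θ : ι → ℝ}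
    (hθ : ∀ i, θ i ∈ Set.Ioo (0 : ℝ) 1) :
    ∃ r : ℝ, 0 < r ∧ ∑ i ∈ s, θ i = r * ∑ i ∈ s, (1 - θ i) := by
  have hnum : 0 < ∑ i ∈ s, θ i := sum_pos (fun i _ ↦ (hθ i).1) hs
  have hden : 0 < ∑ i ∈ s, (1 - θ i) := sum_pos (fun i _ ↦ sub_pos.2 (hθ i).2) hs
  exact ⟨_, div_pos hnum hden, (div_mul_cancel₀ _ hden.ne').symm⟩

lemma mix_mixtureKernel_mem_simplexPos (hN : N + 1 = 2 ^ k) {p : (Fin N → Bool) → ℝ}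
    (hp : p ∈ Eset N) {lam : (Fin N → Bool) → ℝ} (hlam : ∀ z, lam z ∈ Set.Icc (0 : ℝ) 1)
    (hratio : ∀ l ≤ N, ∃ r : ℝ, 0 < r ∧
      ∑ z with lidx z = l, lam z = r * ∑ z with lidx z = l, (1 - lam z)) :
    mix p (mixtureKernel (k + 1) lam) ∈ simplexPos (k + 1) := by
  obtain ⟨q, hq, rfl⟩ := mem_Eset_iff.1 hp
  refine ⟨fun x ↦ ?_, ?_⟩
  · induction x using Fin.consCases with | _ b y
    obtain ⟨l, hl, rfl⟩ := exists_lt_binVec_eq y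
    have hlN : l ≤ N := by omega
    obtain ⟨r, hr, hlr⟩ := hratio l hlN
    have hmass := sum_bernoulliMass_pos_of_ratio (filter_lidx_eq_nonempty hlN) hr hlr b
    obtain ⟨z, hz, hzpos⟩ := exists_lt_of_sum_lt (f := fun _ ↦ (0 : ℝ)) (by simpa using hmass)
    rw [mix_mixtureKernel_cons_binVec lam (by omega) _ b hl]
    exact sum_pos'
      (fun z _ ↦ mul_nonneg (productMass_pos hq z).le (bernoulliMass_nonneg (hlam z) b))
      ⟨z, hz, mul_pos (productMass_pos hq z) hzpos⟩
  · simp only [mix]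
    rw [sum_comm]
    simp only [← mul_sum, sum_mixtureKernel, mul_one, sum_productMass]

lemma exists_mix_mixtureKernel_eq (hN : N + 1 = 2 ^ k) {q : (Fin (k + 1) → Bool) → ℝ}
    (hq : q ∈ simplexPos (k + 1)) : ∃ p ∈ Eset N, ∃ w c,
      q = mix p (mixtureKernel (k + 1) fun z ↦ 1 - sigmoid (netInput w c z)) := by
  obtain ⟨hpos, hsum⟩ := hq
  obtain ⟨θ, hθ, hmass⟩ := exists_sum_productMass_lidx_eq N
    (m := fun l ↦ ∑ b, q (Fin.cons b (binVec k l))) fun l _ ↦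
      sum_pos (fun b _ ↦ hpos _) univ_nonempty
  rw [hN, sum_cons_binVec, hsum] at hmass
  simp only [one_mul, Fintype.sum_bool] at hmass
  obtain ⟨w, c, hwc⟩ := exists_sum_mul_sigmoid_netInput_lidx_eq (productMass θ)
    (fun l ↦ q (Fin.cons true (binVec k l))) fun l hl ↦
      ⟨hpos _, hmass l hl ▸ lt_add_of_pos_right _ (hpos _)⟩
  refine ⟨productMass θ, mem_Eset_iff.2 ⟨θ, hθ, rfl⟩, w, c, funext fun x ↦ ?_⟩
  induction x using Fin.consCases with | _ b y
  obtain ⟨l, hl, rfl⟩ := exists_lt_binVec_eq y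
  have hlN : l ≤ N := by omega
  rw [mix_mixtureKernel_cons_binVec _ (by omega) _ b hl]
  cases b
  · simp [bernoulliMass, mul_sub, hmass l hlN, hwc l hlN]
  · simp [bernoulliMass, hwc l hlN]

lemma mixtureKernel_mem_Qcoll (k : ℕ) (w : Fin (2 ^ k - 1) → ℝ) (c : ℝ) :
    mixtureKernel (k + 1) (fun z ↦ 1 - sigmoid (netInput w c z)) ∈ Qcoll (k + 1) := by
  have hlam (z) : 1 - sigmoid (netInput w c z) ∈ Set.Ioo (0 : ℝ) 1 := by
    rw [sigmoid_eq_realSigmoid]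
    exact ⟨sub_pos.2 (Real.sigmoid_lt_one _), sub_lt_self _ (Real.sigmoid_pos _)⟩
  exact ⟨_, fun z ↦ Set.Ioo_subset_Icc_self (hlam z), fun _ _ ↦ rfl,
    mixtureKernel_mem_closure_Fset k w c,
    fun l hl ↦ exists_pos_ratio (filter_lidx_eq_nonempty hl) hlam⟩

end Image

/-- Proposition 6: for `n ≥ 2` and `N = 2^(n-1) - 1`,
`{p^⊤Q : p ∈ E_N, Q ∈ Q_n^N} = Δ_n^+`. -/
theorem image_of_products_and_mixture_kernels_is_positive_simplex (n : ℕ) (hn : 2 ≤ n) :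
    {q | ∃ p ∈ Eset (2 ^ (n - 1) - 1), ∃ Q ∈ Qcoll n, q = mix p Q} = simplexPos n := by
  obtain ⟨k, rfl⟩ : ∃ k, n = k + 1 := ⟨n - 1, by omega⟩
  have hN : 2 ^ k - 1 + 1 = 2 ^ k := Nat.sub_add_cancel Nat.one_le_two_pow
  ext q
  constructor
  · rintro ⟨p, hp, Q, ⟨lam, hlam, hQ, -, hratio⟩, rfl⟩
    obtain rfl : Q = mixtureKernel (k + 1) lam := funext fun z ↦ funext (hQ z)
    exact mix_mixtureKernel_mem_simplexPos hN hp hlam hratio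
  · intro hq
    obtain ⟨p, hp, w, c, hqp⟩ := exists_mix_mixtureKernel_eq hN hq
    exact ⟨p, hp, _, mixtureKernel_mem_Qcoll k w c, hqp⟩
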